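/- Let k ≥ 1 be a natural number and let c : ℝ → ℝ be c(x) = sin(2πx)^{2k}. Then the map c ↦ ∫₀¹ log|c(x)| dx on 1-periodic functions is discontinuous at c in the C^k topology: there exists a sequence (c_n) of real-analytic 1-periodic functions ℝ → ℝ such that max_{0 ≤ j ≤ k} sup_{x ∈ ℝ} |c_n^{(j)}(x) − c^{(j)}(x)| → 0 as n → ∞, yet ∫₀¹ log|c_n(x)| dx does not converge to ∫₀¹ log|c(x)| dx. -/

import Mathlib

open MeasureTheory Filter
open scoped Real

open Polynomial in
/-- Every real polynomial has an antiderivative of order `k` vanishing to order `k` at `0`. -/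
theorem exists_iterate_derivative_eq (q : ℝ[X]) (k : ℕ) :
    ∃ p : ℝ[X], derivative^[k] p = q ∧ ∀ j < k, (derivative^[j] p).eval 0 = 0 := by
  have antideriv : ∀ q : ℝ[X], ∃ p : ℝ[X], derivative p = q ∧ p.eval 0 = 0 := by
    intro q
    induction q using Polynomial.induction_on' with
    | add p q hp hq =>
      obtain ⟨P, hP, hP0⟩ := hp
      obtain ⟨Q, hQ, hQ0⟩ := hq
      exact ⟨P + Q, by simp [hP, hQ], by simp [hP0, hQ0]⟩
    | monomial n a =>
      refine ⟨monomial (n + 1) (a / (n + 1)), ?_, by simp⟩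
      rw [derivative_monomial]
      have : (n : ℝ) + 1 ≠ 0 := by positivity
      congr 1
      push_cast
      field_simp
  induction k with
  | zero => exact ⟨q, rfl, by simp⟩
  | succ k ih =>
    obtain ⟨p, hp, hp0⟩ := ih
    obtain ⟨P, hP, hP0⟩ := antideriv p
    refine ⟨P, by rw [Function.iterate_succ_apply, hP, hp], ?_⟩
    rintro (_ | j) hj
    · exact hP0
    · rw [Function.iterate_succ_apply, hP]
      exact hp0 j (by omega)

open Polynomial in
/-- If a polynomial vanishes to order `k` at `0`, a bound for its `k`-th derivative on
`[-r, r] ⊆ [-1, 1]` is also a bound for the lower derivatives. -/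
theorem abs_eval_iterate_derivative_le {r ε : ℝ} (hr : r ≤ 1) (k : ℕ) (p : ℝ[X])
    (hp0 : ∀ j < k, (derivative^[j] p).eval 0 = 0)
    (hp : ∀ y, |y| ≤ r → |(derivative^[k] p).eval y| ≤ ε) :
    ∀ j ≤ k, ∀ y, |y| ≤ r → |(derivative^[j] p).eval y| ≤ ε := by
  intro j hj
  induction hj using Nat.decreasingInduction with
  | self => exact hp
  | of_succ j hj ih =>
    intro y hy
    have hr0 : 0 ≤ r := (abs_nonneg y).trans hy
    have hε : 0 ≤ ε := (abs_nonneg _).trans (hp y hy)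
    have key := (convex_Icc (-r) r).norm_image_sub_le_of_norm_hasDerivWithin_le
      (f := fun z => (derivative^[j] p).eval z)
      (f' := fun z => (derivative^[j + 1] p).eval z) (C := ε) (x := 0) (y := y)
      (fun z _ => by
        rw [Function.iterate_succ_apply']
        exact ((derivative^[j] p).hasDerivAt z).hasDerivWithinAt)
      (fun z hz => ih z (abs_le.2 hz)) ⟨by linarith, hr0⟩ (abs_le.1 hy)
    simp only [hp0 j hj, sub_zero, Real.norm_eq_abs] at key
    exact key.trans (mul_le_of_le_one_right hε (hy.trans hr))

open Polynomial in
/-- There are polynomials arbitrarily `C^k`-close to `y ^ (2 * k)` on `[-1, 1]` which are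
extremely small on some neighbourhood of `0`, relative to the size of that neighbourhood. -/
theorem exists_polynomial_near_X_pow_small_near_zero {k : ℕ} (hk : 1 ≤ k) {η : ℝ} (hη : 0 < η)
    (M : ℝ) :
    ∃ p : ℝ[X],
      (∀ j ≤ k, ∀ y, |y| ≤ 1 → |(derivative^[j] (p - X ^ (2 * k))).eval y| ≤ η) ∧
      ∃ δ, 0 < δ ∧ δ ≤ 1 ∧ ∀ y, |y| ≤ δ → |p.eval y| ≤ Real.exp (-(M / δ)) := by
  set r : ℝ[X] := derivative^[k] (X ^ (2 * k)) with hr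
  have hX0 : ∀ j ≤ k, (derivative^[j] (X ^ (2 * k) : ℝ[X])).eval 0 = 0 := by
    intro j hj
    have : 2 * k - j ≠ 0 := by omega
    simp [iterate_derivative_X_pow_eq_smul, this]
  have huc : UniformContinuousOn (fun y => r.eval y) (Set.Icc (-1) 1) :=
    isCompact_Icc.uniformContinuousOn_of_continuous r.continuous.continuousOn
  obtain ⟨d, hd, hdr⟩ := Metric.uniformContinuousOn_iff.1 huc (η / 2) (by positivity)
  set δ : ℝ := min 1 (d / 2) with hδ
  have hδ0 : 0 < δ := by positivity
  have hδ1 : δ ≤ 1 := min_le_left _ _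
  have hδd : δ < d := (min_le_right _ _).trans_lt (by linarith)
  set S : ℝ → ℝ := fun y => y - max (-δ) (min y δ) with hS
  have hSd : ∀ y, |S y - y| ≤ δ := by
    intro y
    simp only [hS, sub_sub_cancel_left, abs_neg]
    exact abs_le.2 ⟨le_max_left _ _, max_le (by linarith) (min_le_right _ _)⟩
  have hS1 : ∀ y ∈ Set.Icc (-1 : ℝ) 1, S y ∈ Set.Icc (-1 : ℝ) 1 := by
    rintro y ⟨h1, h2⟩
    simp only [hS, Set.mem_Icc]
    grind
  have hS0 : ∀ y, |y| ≤ δ → S y = 0 := by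
    intro y hy
    have := abs_le.1 hy
    simp [hS, this.1, this.2]
  have hScont : Continuous S := by fun_prop
  set ε : ℝ := min (η / 2) (Real.exp (-(M / δ))) with hε
  have hε0 : 0 < ε := lt_min (by positivity) (Real.exp_pos _)
  obtain ⟨q, hq⟩ := exists_polynomial_near_of_continuousOn (-1) 1 (fun y => r.eval (S y))
    (r.continuous.comp hScont).continuousOn ε hε0
  obtain ⟨p, hpq, hp0⟩ := exists_iterate_derivative_eq q k
  refine ⟨p, ?_, δ, hδ0, hδ1, ?_⟩
  · refine abs_eval_iterate_derivative_le le_rfl k _ ?_ ?_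
    · intro j hj
      rw [iterate_derivative_sub, eval_sub, hp0 j hj, hX0 j hj.le, sub_zero]
    · intro y hy
      rw [iterate_derivative_sub, eval_sub, hpq, ← hr]
      have hy' := abs_le.1 hy
      have h1 := hq y hy'
      have h2 := hdr (S y) (hS1 y hy') y hy' ((hSd y).trans_lt hδd)
      rw [Real.dist_eq] at h2
      have h3 : ε ≤ η / 2 := min_le_left _ _
      have h4 := abs_sub_le (q.eval y) (r.eval (S y)) (r.eval y)
      linarith
  · refine abs_eval_iterate_derivative_le hδ1 k p hp0 ?_ 0 (Nat.zero_le k)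
    intro y hy
    have h1 := hq y (abs_le.1 (hy.trans hδ1))
    simp only [hS0 y hy] at h1
    rw [hr, hX0 k le_rfl, sub_zero] at h1
    rw [hpq]
    exact h1.le.trans (min_le_right _ _)

theorem abs_iteratedDeriv_sin_le_one (n : ℕ) (x : ℝ) : |iteratedDeriv n Real.sin x| ≤ 1 := by
  obtain ⟨m, rfl | rfl⟩ := n.even_or_odd'
  · simpa [abs_mul] using Real.abs_sin_le_one x
  · simpa [abs_mul] using Real.abs_cos_le_one x

theorem abs_iteratedDeriv_sin_two_pi_mul_le (n : ℕ) (x : ℝ) :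
    |iteratedDeriv n (fun x => Real.sin (2 * π * x)) x| ≤ (2 * π) ^ n := by
  rw [iteratedDeriv_comp_const_mul Real.contDiff_sin, abs_mul, abs_of_nonneg (by positivity)]
  exact mul_le_of_le_one_right (by positivity) (abs_iteratedDeriv_sin_le_one _ _)

open Polynomial in
theorem Polynomial.iteratedDeriv_eval (p : ℝ[X]) (n : ℕ) :
    iteratedDeriv n (fun x => p.eval x) = fun x => (derivative^[n] p).eval x := by
  induction n with
  | zero => simp
  | succ n ih =>
    rw [iteratedDeriv_succ, ih, Function.iterate_succ_apply']
    funext x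
    exact Polynomial.deriv _

open Polynomial in
/-- A `C^k` bound on `[-1, 1]` for a polynomial gives a `C^k` bound for its composition with
`x ↦ sin (2πx)`. -/
theorem abs_iteratedDeriv_eval_sin_le {k : ℕ} {η : ℝ} (p : ℝ[X])
    (hp : ∀ j ≤ k, ∀ y, |y| ≤ 1 → |(derivative^[j] p).eval y| ≤ η) (j : ℕ) (hj : j ≤ k) (x : ℝ) :
    |iteratedDeriv j (fun x => p.eval (Real.sin (2 * π * x))) x| ≤
      j.factorial * η * (2 * π) ^ j := by
  have key := norm_iteratedFDeriv_comp_le (𝕜 := ℝ) (g := fun y => p.eval y)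
    (f := fun x => Real.sin (2 * π * x)) (n := j) (N := j) (C := η) (D := 2 * π)
    (by simpa using p.contDiff_aeval (𝕜 := ℝ) j) (by fun_prop) le_rfl x
    (fun i hi => by
      rw [norm_iteratedFDeriv_eq_norm_iteratedDeriv, p.iteratedDeriv_eval]
      exact hp i (hi.trans hj) _ (Real.abs_sin_le_one _))
    (fun i _ _ => by
      rw [norm_iteratedFDeriv_eq_norm_iteratedDeriv]
      exact abs_iteratedDeriv_sin_two_pi_mul_le i x)
  rwa [norm_iteratedFDeriv_eq_norm_iteratedDeriv] at key

/-- An upper bound for the log-integral of a nonzero analytic function which is very small on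
an initial segment. -/
theorem integral_log_abs_le {f : ℝ → ℝ} (hf : ∀ x, AnalyticAt ℝ f x) {x₀ : ℝ} (hx₀ : f x₀ ≠ 0)
    {B : ℝ} (hB : 0 ≤ B) (hfB : ∀ x, |f x| ≤ B) {a L : ℝ} (ha0 : 0 ≤ a) (ha1 : a ≤ 1)
    (hL : ∀ x ∈ Set.Icc 0 a, |f x| ≤ Real.exp (-L)) :
    ∫ x in (0 : ℝ)..1, Real.log |f x| ≤ B - a * L := by
  have hint : ∀ u v : ℝ, IntervalIntegrable (fun x => Real.log |f x|) volume u v := fun u v =>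
    MeromorphicOn.intervalIntegrable_log_norm (fun x _ => (hf x).meromorphicAt)
  have hne : ∀ᵐ x ∂volume.restrict (Set.Icc 0 a), f x ≠ 0 := by
    have h := AnalyticOnNhd.preimage_zero_mem_codiscrete (fun x _ => hf x) hx₀
    exact ae_restrict_le_codiscreteWithin measurableSet_Icc
      (codiscreteWithin_mono (Set.subset_univ _) h)
  have h1 : ∫ x in (0 : ℝ)..a, Real.log |f x| ≤ ∫ _ in (0 : ℝ)..a, -L := by
    refine intervalIntegral.integral_mono_ae_restrict ha0 (hint _ _) (by simp) ?_
    filter_upwards [hne, ae_restrict_mem measurableSet_Icc] with x hx hxa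
    exact (Real.log_le_iff_le_exp (abs_pos.2 hx)).2 (hL x hxa)
  have h2 : ∫ x in a..1, Real.log |f x| ≤ ∫ _ in a..1, B :=
    intervalIntegral.integral_mono_on ha1 (hint _ _) (by simp)
      fun x _ => (Real.log_le_self (abs_nonneg _)).trans (hfB x)
  rw [← intervalIntegral.integral_add_adjacent_intervals (hint 0 a) (hint a 1)]
  simp only [intervalIntegral.integral_const, smul_eq_mul] at h1 h2
  nlinarith

/-- For `k ≥ 1` and `c(x) = sin(2πx)^{2k}`, the map `c ↦ ∫₀¹ log|c| dx` is
discontinuous at `c` in the `C^k` topology: there is a sequence of real-analytic 1-periodic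
functions converging to `c` in `C^k` whose log-integrals do not converge to that of `c`. -/
theorem logIntegral_discontinuous_Ck (k : ℕ) (hk : 1 ≤ k) :
    ∃ cn : ℕ → ℝ → ℝ,
      (∀ n, ∀ x : ℝ, AnalyticAt ℝ (cn n) x) ∧
      (∀ n, Function.Periodic (cn n) 1) ∧
      (∀ j ≤ k, TendstoUniformly (fun n => iteratedDeriv j (cn n))
        (iteratedDeriv j (fun x : ℝ => Real.sin (2 * π * x) ^ (2 * k))) atTop) ∧
      ¬ Tendsto (fun n => ∫ x in (0:ℝ)..1, Real.log |cn n x|) atTop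
        (nhds (∫ x in (0:ℝ)..1, Real.log |Real.sin (2 * π * x) ^ (2 * k)|)) := by
  choose p hp δ hδ0 hδ1 hsmall using fun n : ℕ =>
    exists_polynomial_near_X_pow_small_near_zero hk
      (show (0 : ℝ) < 1 / 2 / ((n : ℝ) + 1) by positivity) n
  have han : ∀ n, ∀ x : ℝ, AnalyticAt ℝ (fun x => (p n).eval (Real.sin (2 * π * x))) x := by
    intro n x
    exact (AnalyticOnNhd.eval_polynomial (p n) _ (Set.mem_univ _)).comp
      (f := fun x => Real.sin (2 * π * x)) (by fun_prop)
  refine ⟨fun n x => (p n).eval (Real.sin (2 * π * x)), han, ?_, ?_, ?_⟩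
  · intro n x
    simp only [mul_add, mul_one, Real.sin_add_two_pi]
  · intro j hj
    rw [Metric.tendstoUniformly_iff]
    intro e he
    have hlim : Tendsto (fun n : ℕ => j.factorial * (1 / 2 / ((n : ℝ) + 1)) * (2 * π) ^ j)
        atTop (nhds 0) := by
      have h : Tendsto (fun n : ℕ => 1 / 2 / ((n : ℝ) + 1)) atTop (nhds 0) :=
        tendsto_const_nhds.div_atTop (tendsto_atTop_add_const_right _ _ tendsto_natCast_atTop_atTop)
      simpa using (h.const_mul (j.factorial : ℝ)).mul_const ((2 * π) ^ j)
    filter_upwards [hlim.eventually_lt_const he] with n hn x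
    rw [dist_comm, Real.dist_eq]
    refine lt_of_le_of_lt ?_ hn
    have key := abs_iteratedDeriv_eval_sin_le _ (hp n) j hj x
    simp only [Polynomial.eval_sub, Polynomial.eval_pow, Polynomial.eval_X] at key
    rwa [iteratedDeriv_fun_sub (han n x).contDiffAt (by fun_prop)] at key
  · have hclose : ∀ n y, |y| ≤ 1 → |(p n).eval y - y ^ (2 * k)| ≤ 1 / 2 := by
      intro n y hy
      have h := hp n 0 (Nat.zero_le k) y hy
      simp only [Function.iterate_zero, id_eq, Polynomial.eval_sub, Polynomial.eval_pow,
        Polynomial.eval_X] at h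
      exact h.trans (div_le_self (by norm_num) (by linarith [n.cast_nonneg (α := ℝ)]))
    have hbound : ∀ n : ℕ, ∫ x in (0 : ℝ)..1, Real.log |(p n).eval (Real.sin (2 * π * x))| ≤
        2 - n / (2 * π) := by
      intro n
      have hpi := Real.pi_gt_three
      have hd := hδ0 n
      have hd1 := hδ1 n
      have h := integral_log_abs_le (han n) (x₀ := 1 / 4) (B := 2) (a := δ n / (2 * π))
        (L := n / δ n) ?_ zero_le_two ?_ (by positivity) ?_ ?_
      · refine h.trans_eq ?_
        field_simp
      · have h4 : 2 * π * (1 / 4) = π / 2 := by ring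
        have h1 := abs_le.1 (hclose n 1 (by simp))
        rw [h4, Real.sin_pi_div_two]
        rw [one_pow] at h1
        intro h0
        linarith
      · intro x
        have hs := Real.abs_sin_le_one (2 * π * x)
        have h1 := abs_le.1 (hclose n _ hs)
        have h2 : Real.sin (2 * π * x) ^ (2 * k) ≤ 1 := by
          rw [← (even_two_mul k).pow_abs]
          exact pow_le_one₀ (abs_nonneg _) hs
        have h3 : 0 ≤ Real.sin (2 * π * x) ^ (2 * k) := (even_two_mul k).pow_nonneg _
        exact abs_le.2 ⟨by linarith, by linarith⟩
      · rw [div_le_one (by positivity)]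
        linarith
      · rintro x ⟨hx0, hxa⟩
        refine hsmall n _ (Real.abs_sin_le_abs.trans ?_)
        rw [abs_of_nonneg (by positivity), mul_comm]
        exact (le_div_iff₀ (by positivity)).1 hxa
    have hbot : Tendsto (fun n : ℕ => 2 - (n : ℝ) / (2 * π)) atTop atBot :=
      tendsto_atBot_add_const_left _ 2 (tendsto_neg_atTop_atBot.comp
        (tendsto_natCast_atTop_atTop.atTop_div_const Real.two_pi_pos))
    exact not_tendsto_nhds_of_tendsto_atBot (tendsto_atBot_mono hbound hbot) _
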